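/- Assume 2 is a non-zero-divisor in k. Then {c ∈ R : a·c = c·s(a) for all a ∈ ker ∂} = {(x₁ − x₂)·h : h ∈ C}, where C is the k-subalgebra generated by x₁² and x₂². Consequently, every additive map ξ : R → R that is right R-linear (ξ(m·r) = ξ(m)·r) and satisfies ξ(s(a)·m) = a·ξ(m) for all a ∈ ker ∂ (i.e. every homomorphism of (R^s, R)-bimodules from the twisted bimodule R̲ to R) is of the form ξ(m) = h·(x₁ − x₂)·m for a unique h ∈ C. -/

import Mathlib

/-- The anticommutation relation `x₁x₂ + x₂x₁ = 0` on the free `k`-algebra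
on two generators. -/
inductive OddRel (k : Type*) [CommRing k] :
    FreeAlgebra k (Fin 2) → FreeAlgebra k (Fin 2) → Prop
  | anticomm : OddRel k
      (FreeAlgebra.ι k (0 : Fin 2) * FreeAlgebra.ι k (1 : Fin 2) +
        FreeAlgebra.ι k (1 : Fin 2) * FreeAlgebra.ι k (0 : Fin 2)) 0

/-- The `k`-algebra of skew polynomials in two variables,
`R = k⟨x₁,x₂⟩/(x₁x₂ + x₂x₁)`. -/
abbrev OddPoly (k : Type*) [CommRing k] := RingQuot (OddRel k)

/-- The generators `x₁ = X k 0` and `x₂ = X k 1` of `R`. -/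
noncomputable def X (k : Type*) [CommRing k] (i : Fin 2) : OddPoly k :=
  RingQuot.mkAlgHom k (OddRel k) (FreeAlgebra.ι k i)

namespace OddPoly

variable {k : Type*} [CommRing k]

/-- `neg_mul` with the negation of `RingQuot`, which `rw` and `simp` do not unify with the one
inherited from the ring structure. -/
protected theorem neg_mul (a b : OddPoly k) : -a * b = -(a * b) := neg_mul a b

/-- `mul_neg` with the negation of `RingQuot`. -/
protected theorem mul_neg (a b : OddPoly k) : a * -b = -(a * b) := mul_neg a b

theorem X_one_mul_X_zero : X k 1 * X k 0 = -(X k 0 * X k 1) := by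
  have h := RingQuot.mkAlgHom_rel k (OddRel.anticomm (k := k))
  simp only [map_add, map_mul, map_zero] at h
  exact eq_neg_of_add_eq_zero_right h

theorem X_one_mul_X_zero_mul (a : OddPoly k) :
    X k 1 * (X k 0 * a) = -(X k 0 * (X k 1 * a)) := by
  rw [← mul_assoc, X_one_mul_X_zero, OddPoly.neg_mul, mul_assoc]

@[elab_as_elim]
theorem induction {P : OddPoly k → Prop} (scalar : ∀ r : k, P (algebraMap k _ r))
    (gen : ∀ i, P (X k i)) (mul : ∀ a b, P a → P b → P (a * b))
    (add : ∀ a b, P a → P b → P (a + b)) (a : OddPoly k) : P a := by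
  obtain ⟨y, rfl⟩ := RingQuot.mkAlgHom_surjective k (OddRel k) a
  induction y using FreeAlgebra.induction with
  | grade0 r => simpa using scalar r
  | grade1 i => exact gen i
  | mul a b ha hb => simpa using mul _ _ ha hb
  | add a b ha hb => simpa using add _ _ ha hb

theorem mem_center_of_commute {z : OddPoly k} (h : ∀ i, X k i * z = z * X k i) :
    z ∈ Subalgebra.center k (OddPoly k) := by
  rw [Subalgebra.mem_center_iff]
  intro a
  induction a using OddPoly.induction with
  | scalar r => exact Algebra.commutes r z
  | gen i => exact h i
  | mul a b ha hb => rw [mul_assoc, hb, ← mul_assoc, ha, mul_assoc]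
  | add a b ha hb => rw [add_mul, mul_add, ha, hb]

theorem X_sq_mem_center (i : Fin 2) : X k i ^ 2 ∈ Subalgebra.center k (OddPoly k) := by
  apply mem_center_of_commute
  intro j
  fin_cases i <;> fin_cases j <;>
    simp [pow_two, mul_assoc, X_one_mul_X_zero, X_one_mul_X_zero_mul, OddPoly.mul_neg]

variable (k) in
/-- The evaluation of commutative polynomials at the central elements `x₁²` and `x₂²`. -/
noncomputable def evalSq : MvPolynomial (Fin 2) k →ₐ[k] OddPoly k :=
  (Subalgebra.center k (OddPoly k)).val.comp
    (MvPolynomial.aeval fun i => ⟨X k i ^ 2, X_sq_mem_center i⟩)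

@[simp]
theorem evalSq_X (i : Fin 2) : evalSq k (MvPolynomial.X i) = X k i ^ 2 := by
  simp [evalSq]

theorem mul_evalSq (a : OddPoly k) (p : MvPolynomial (Fin 2) k) :
    a * evalSq k p = evalSq k p * a :=
  Subalgebra.mem_center_iff.mp (Subtype.property _) a

theorem range_evalSq :
    (evalSq k).range = Algebra.adjoin k ({X k 0 ^ 2, X k 1 ^ 2} : Set (OddPoly k)) := by
  rw [← Algebra.map_top, ← MvPolynomial.adjoin_range_X, AlgHom.map_adjoin, ← Set.range_comp]
  congr 1
  ext a
  simp [Fin.exists_fin_two, eq_comm]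

theorem exists_eq_evalSq (a : OddPoly k) : ∃ p q r t : MvPolynomial (Fin 2) k,
    a = evalSq k p + X k 0 * evalSq k q + X k 1 * evalSq k r + X k 0 * X k 1 * evalSq k t := by
  suffices H : ∀ p q r t : MvPolynomial (Fin 2) k, ∃ p' q' r' t' : MvPolynomial (Fin 2) k,
      a * (evalSq k p + X k 0 * evalSq k q + X k 1 * evalSq k r + X k 0 * X k 1 * evalSq k t) =
      evalSq k p' + X k 0 * evalSq k q' + X k 1 * evalSq k r' + X k 0 * X k 1 * evalSq k t' by
    simpa using H 1 0 0 0
  induction a using OddPoly.induction with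
  | scalar c =>
    intro p q r t
    refine ⟨c • p, c • q, c • r, c • t, ?_⟩
    simp [← Algebra.smul_def, smul_add]
  | gen i =>
    intro p q r t
    fin_cases i
    · refine ⟨.X 0 * q, p, .X 0 * t, r, ?_⟩
      have h := mul_evalSq (X k 1) (.X 0)
      simp only [evalSq_X] at h
      simp only [Fin.zero_eta, mul_add, map_mul, evalSq_X]
      rw [← mul_assoc (X k 1) (X k 0 ^ 2), h]
      simp only [pow_two, mul_assoc]
      abel
    · refine ⟨.X 1 * r, -(.X 1 * t), p, -q, ?_⟩
      simp only [Fin.mk_one, mul_add, map_mul, map_neg, evalSq_X, pow_two, mul_assoc,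
        X_one_mul_X_zero_mul, OddPoly.mul_neg]
      abel
  | mul a b ha hb =>
    intro p q r t
    obtain ⟨p', q', r', t', h⟩ := hb p q r t
    rw [mul_assoc, h]
    exact ha p' q' r' t'
  | add a b ha hb =>
    intro p q r t
    obtain ⟨p₁, q₁, r₁, t₁, h₁⟩ := ha p q r t
    obtain ⟨p₂, q₂, r₂, t₂, h₂⟩ := hb p q r t
    refine ⟨p₁ + p₂, q₁ + q₂, r₁ + r₂, t₁ + t₂, ?_⟩
    rw [add_mul, h₁, h₂]
    simp only [map_add, mul_add]
    abel

variable (k) in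
/-- The quaternion algebra over `k[u, v]` with `i² = u`, `j² = v` and `ji = -ij`. -/
abbrev Quat : Type _ :=
  QuaternionAlgebra (MvPolynomial (Fin 2) k) (MvPolynomial.X 0) 0 (MvPolynomial.X 1)

variable (k) in
/-- The homomorphism sending `x₁` to `i` and `x₂` to `j`. -/
noncomputable def toQuat : OddPoly k →ₐ[k] Quat k :=
  RingQuot.liftAlgHom k ⟨FreeAlgebra.lift k ![⟨0, 1, 0, 0⟩, ⟨0, 0, 1, 0⟩], by
    rintro _ _ ⟨⟩
    ext <;> simp⟩

@[simp]
theorem toQuat_X_zero : toQuat k (X k 0) = ⟨0, 1, 0, 0⟩ := by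
  simp [toQuat, X]

@[simp]
theorem toQuat_X_one : toQuat k (X k 1) = ⟨0, 0, 1, 0⟩ := by
  simp [toQuat, X]

@[simp]
theorem toQuat_evalSq (p : MvPolynomial (Fin 2) k) :
    toQuat k (evalSq k p) = ⟨p, 0, 0, 0⟩ := by
  have h : (toQuat k).comp (evalSq k) =
      IsScalarTower.toAlgHom k (MvPolynomial (Fin 2) k) (Quat k) := by
    apply MvPolynomial.algHom_ext
    intro i
    fin_cases i <;> ext <;> simp [pow_two, QuaternionAlgebra.algebraMap_eq]
  exact DFunLike.congr_fun h p

/-- The centralizing conditions for `x₁ - x₂` and `x₁x₂` alone force `c` to lie in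
`(x₁ - x₂)C`. -/
theorem exists_eq_X_sub_X_mul_evalSq (h2 : ∀ a : k, 2 * a = 0 → a = 0) {c : OddPoly k}
    (hsub : (X k 0 - X k 1) * c = c * (X k 0 - X k 1))
    (hmul : X k 0 * X k 1 * c = -(c * (X k 0 * X k 1))) :
    ∃ p, c = (X k 0 - X k 1) * evalSq k p := by
  obtain ⟨p, q, r, t, rfl⟩ := exists_eq_evalSq c
  have eq_zero_of_eq_neg (f : MvPolynomial (Fin 2) k) (hf : f = -f) : f = 0 := by
    ext m
    apply h2
    have := congrArg (MvPolynomial.coeff m) hf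
    rw [MvPolynomial.coeff_neg] at this
    rw [two_mul]
    exact eq_neg_iff_add_eq_zero.mp this
  have hp : p = 0 := by
    have h := congrArg (fun c => (toQuat k c).imK) hmul
    exact eq_zero_of_eq_neg p (by simpa using h)
  have ht : t = 0 := by
    have h := congrArg (fun c => (toQuat k c).imI) hsub
    have h' := eq_zero_of_eq_neg (.X 1 * t) (by simpa using h)
    exact (MvPolynomial.isRegular_X (n := 1)).left (h'.trans (mul_zero _).symm)
  have hr : r = -q := by
    have h := congrArg (fun c => (toQuat k c).imK) hsub
    have h' : r + q = -q - r := by simpa using h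
    exact eq_neg_of_add_eq_zero_left (eq_zero_of_eq_neg _ (by linear_combination h'))
  subst hp ht hr
  refine ⟨q, ?_⟩
  rw [map_neg, OddPoly.mul_neg, map_zero, mul_zero, sub_mul]
  abel

/-- The twisted commutator with `x₁ - x₂` is `(x₁² - x₂²)` times the conjugate `s ∘ ∂`. -/
theorem mul_X_sub_X_sub (s : OddPoly k ≃ₐ[k] OddPoly k)
    (hs1 : s (X k 0) = -X k 1) (hs2 : s (X k 1) = -X k 0) (D : OddPoly k →ₗ[k] OddPoly k)
    (hD0 : D 1 = 0) (hD1 : D (X k 0) = 1) (hD2 : D (X k 1) = 1)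
    (hDL : ∀ f g : OddPoly k, D (f * g) = D f * g + s f * D g) (f : OddPoly k) :
    f * (X k 0 - X k 1) - (X k 0 - X k 1) * s f = (X k 0 ^ 2 - X k 1 ^ 2) * s (D f) := by
  have hss (a : OddPoly k) : s (s a) = a := by
    induction a using OddPoly.induction with
    | scalar r => simp
    | gen i => fin_cases i <;> simp [hs1, hs2]
    | mul a b ha hb => simp [ha, hb]
    | add a b ha hb => simp [ha, hb]
  induction f using OddPoly.induction with
  | scalar r =>
    simp [Algebra.algebraMap_eq_smul_one, hD0]
  | gen i =>
    fin_cases i <;>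
      simp [hs1, hs2, hD1, hD2, mul_sub, sub_mul, pow_two, X_one_mul_X_zero, OddPoly.mul_neg] <;> abel
  | mul a b ha hb =>
    have hz := Subalgebra.mem_center_iff.mp
      (sub_mem (X_sq_mem_center (k := k) 0) (X_sq_mem_center 1)) a
    calc
      _ = a * (b * (X k 0 - X k 1) - (X k 0 - X k 1) * s b) +
          (a * (X k 0 - X k 1) - (X k 0 - X k 1) * s a) * s b := by
        simp only [map_mul, mul_sub, sub_mul, mul_assoc]
        abel
      _ = _ := by
        rw [ha, hb, hDL, map_add, map_mul, map_mul, hss, ← mul_assoc a, hz, mul_add]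
        simp only [mul_assoc]
        exact add_comm _ _
  | add a b ha hb =>
    rw [map_add, map_add, map_add, mul_add, mul_add, ← ha, ← hb,
      add_mul]
    abel

end OddPoly

/-- If `2` is a non-zero-divisor in `k`, then
`{c ∈ R : a·c = c·s(a) for all a ∈ ker ∂} = {(x₁ - x₂)·h : h ∈ C}`;
consequently every additive, right `R`-linear map `ξ : R → R` with
`ξ(s(a)·m) = a·ξ(m)` for `a ∈ ker ∂` (an `(R^s, R)`-bimodule map `R̲ → R`)
is of the form `ξ(m) = h·(x₁ - x₂)·m` for a unique `h ∈ C`. -/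
theorem stmt12 (k : Type*) [CommRing k]
    (h2 : ∀ a : k, 2 * a = 0 → a = 0)
    (s : OddPoly k ≃ₐ[k] OddPoly k)
    (hs1 : s (X k 0) = - X k 1) (hs2 : s (X k 1) = - X k 0)
    (D : OddPoly k →ₗ[k] OddPoly k)
    (hD0 : D 1 = 0) (hD1 : D (X k 0) = 1) (hD2 : D (X k 1) = 1)
    (hDL : ∀ f g : OddPoly k, D (f * g) = D f * g + s f * D g)
 :
    ({c : OddPoly k | ∀ a ∈ LinearMap.ker D, a * c = c * s a} =
      {y : OddPoly k |
        ∃ h ∈ Algebra.adjoin k ({X k 0 ^ 2, X k 1 ^ 2} : Set (OddPoly k)),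
          y = (X k 0 - X k 1) * h}) ∧
    (∀ ξ : OddPoly k →+ OddPoly k,
      (∀ m r : OddPoly k, ξ (m * r) = ξ m * r) →
      (∀ a ∈ LinearMap.ker D, ∀ m : OddPoly k, ξ (s a * m) = a * ξ m) →
      ∃! h : OddPoly k,
        h ∈ Algebra.adjoin k ({X k 0 ^ 2, X k 1 ^ 2} : Set (OddPoly k)) ∧
        ∀ m : OddPoly k, ξ m = h * (X k 0 - X k 1) * m) := by
  have key : ∀ c : OddPoly k, (∀ a ∈ LinearMap.ker D, a * c = c * s a) →
      ∃ p, c = (X k 0 - X k 1) * OddPoly.evalSq k p := by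
    intro c hc
    apply OddPoly.exists_eq_X_sub_X_mul_evalSq h2
    · have h := hc (X k 0 - X k 1) (by simp [hD1, hD2])
      rwa [map_sub, hs1, hs2, neg_sub_neg] at h
    · have h := hc (X k 0 * X k 1) (by simp [hDL, hD1, hD2, hs1])
      simp only [map_mul, hs1, hs2, OddPoly.neg_mul, OddPoly.mul_neg,
        OddPoly.X_one_mul_X_zero] at h
      exact h.trans (neg_neg _)
  refine ⟨?_, fun ξ hξr hξl => ?_⟩
  · ext c
    simp only [Set.mem_ofPred_eq, ← OddPoly.range_evalSq]
    constructor
    · intro hc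
      obtain ⟨p, hp⟩ := key c hc
      exact ⟨_, ⟨p, rfl⟩, hp⟩
    · rintro ⟨_, ⟨p, rfl⟩, rfl⟩ a ha
      have h := OddPoly.mul_X_sub_X_sub s hs1 hs2 D hD0 hD1 hD2 hDL a
      rw [LinearMap.mem_ker.mp ha, map_zero, mul_zero, sub_eq_zero] at h
      change a * (_ * OddPoly.evalSq k p) = _ * OddPoly.evalSq k p * _
      rw [← mul_assoc, h, mul_assoc, mul_assoc, OddPoly.mul_evalSq]
  · have hξ (m : OddPoly k) : ξ m = ξ 1 * m := by rw [← hξr, one_mul]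
    obtain ⟨p, hp⟩ := key (ξ 1) fun a ha => by rw [← hξ, ← hξl a ha, mul_one]
    rw [← OddPoly.range_evalSq]
    refine ⟨OddPoly.evalSq k p, ⟨⟨p, rfl⟩, fun m => ?_⟩, ?_⟩
    · rw [hξ, hp, OddPoly.mul_evalSq]
    · rintro _ ⟨⟨q, rfl⟩, hq⟩
      have h := hq 1
      rw [hp, OddPoly.mul_evalSq, mul_one] at h
      have h' := congrArg (fun c => (OddPoly.toQuat k c).imI) h
      have hpq : p = q := by simpa using h'
      rw [hpq]
      rfl
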